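/- Let P ⊆ Φ_{B_n} be a signed poset, k a field, S = k[U_J : J ∈ J_conn(P)] a polynomial ring with one variable for each connected ideal of P, and φ : S → k[x_1^{±1},…,x_n^{±1}] the k-algebra homomorphism with φ(U_J) = x^{χ_J} = ∏_{i : i ∈ J} x_i · ∏_{i : −i ∈ J} x_i^{−1}. Then ker φ equals the ideal of S generated by the binomials syz(U_J, U_K) = U_J U_K − (∏_A U_A)(∏_B U_B), where {J, K} ranges over Π(P), A ranges over the connected components of the ideal J ∩ K, and B ranges over the connected components of the ideal supp±(χ_J + χ_K) (empty products equal 1). -/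

import Mathlib

open scoped Classical

noncomputable section

/-- Signed index set `±[n]`: `(true, i)` represents `+i`, `(false, i)` represents `-i`. -/
abbrev SIdx (n : ℕ) := Bool × Fin n

/-- Negation `a ↦ -a` on `±[n]`. -/
def negS {n : ℕ} (a : SIdx n) : SIdx n := (!a.1, a.2)

/-- Standard basis vector `e_i` of `ℝ^n`. -/
def stdB (n : ℕ) (i : Fin n) : Fin n → ℝ := Pi.single i 1

/-- `rsgn true = 1`, `rsgn false = -1`. -/
def rsgn (s : Bool) : ℝ := if s then 1 else -1

/-- `v(a)` for `a ∈ ±[n]`: `v(+i) = e_i`, `v(-i) = -e_i`. -/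
def vS {n : ℕ} (a : SIdx n) : Fin n → ℝ := rsgn a.1 • stdB n a.2

/-- `v` on `±[n] ∪ {0}` (with `none` playing the role of `0`). -/
def vO {n : ℕ} : Option (SIdx n) → (Fin n → ℝ)
  | none => 0
  | some a => vS a

/-- Negation on `±[n] ∪ {0}`, fixing `0`. -/
def negO {n : ℕ} : Option (SIdx n) → Option (SIdx n)
  | none => none
  | some a => some (negS a)

/-- Standard inner product on `ℝ^n`. -/
def dotR {n : ℕ} (x y : Fin n → ℝ) : ℝ := ∑ i, x i * y i

/-- The type `B_n` root system `Φ_{B_n}`. -/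
def BnRoots (n : ℕ) : Set (Fin n → ℝ) :=
  {α | (∃ i j : Fin n, i < j ∧ ∃ s t : Bool, α = rsgn s • stdB n i + rsgn t • stdB n j) ∨
    ∃ i : Fin n, ∃ s : Bool, α = rsgn s • stdB n i}

/-- The positive roots `Φ⁺_{B_n}`. -/
def BnPos (n : ℕ) : Set (Fin n → ℝ) :=
  {α | (∃ i j : Fin n, i < j ∧ ∃ t : Bool, α = stdB n i + rsgn t • stdB n j) ∨
    ∃ i : Fin n, α = stdB n i}

/-- The type `C_n` root system `Φ_{C_n}`. -/
def CnRoots (n : ℕ) : Set (Fin n → ℝ) :=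
  {α | (∃ i j : Fin n, i < j ∧ ∃ s t : Bool, α = rsgn s • stdB n i + rsgn t • stdB n j) ∨
    ∃ i : Fin n, ∃ s : Bool, α = (2 * rsgn s) • stdB n i}

/-- Nonnegative real linear combinations of elements of `S`. -/
def nnSpan {n : ℕ} (S : Set (Fin n → ℝ)) : Set (Fin n → ℝ) :=
  {x | ∃ (r : ℕ) (c : Fin r → ℝ) (β : Fin r → (Fin n → ℝ)),
    (∀ m, 0 ≤ c m) ∧ (∀ m, β m ∈ S) ∧ x = ∑ m, c m • β m}

/-- A signed poset: a subset of `Φ_{B_n}`, antisymmetric and closed under positive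
linear combinations remaining in `Φ_{B_n}`. -/
def IsSignedPoset (n : ℕ) (P : Set (Fin n → ℝ)) : Prop :=
  P ⊆ BnRoots n ∧ (∀ α ∈ P, -α ∉ P) ∧ ∀ α ∈ BnRoots n, α ∈ nnSpan P → α ∈ P

/-- A `C_n`-signed poset. -/
def IsCnSignedPoset (n : ℕ) (Q : Set (Fin n → ℝ)) : Prop :=
  Q ⊆ CnRoots n ∧ (∀ α ∈ Q, -α ∉ Q) ∧ ∀ α ∈ CnRoots n, α ∈ nnSpan Q → α ∈ Q

/-- The root cone `K^rt_P`. -/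
def rootCone {n : ℕ} (P : Set (Fin n → ℝ)) : Set (Fin n → ℝ) := nnSpan P

/-- The weight cone `K^wt_P`. -/
def weightCone {n : ℕ} (P : Set (Fin n → ℝ)) : Set (Fin n → ℝ) :=
  {f | ∀ α ∈ P, 0 ≤ dotR f α}

/-- The Fischer (strict) order on `±[n] ∪ {0}`:
`a < b` iff `v(a) - v(b) ∈ P`, or (`b = -a ≠ 0` and `v(a) ∈ P`). -/
def fLT {n : ℕ} (P : Set (Fin n → ℝ)) (a b : Option (SIdx n)) : Prop :=
  vO a - vO b ∈ P ∨ (a ≠ none ∧ b = negO a ∧ vO a ∈ P)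

/-- A subset of `±[n]` is isotropic if it contains no pair `{i, -i}`. -/
def Isotropic {n : ℕ} (J : Finset (SIdx n)) : Prop :=
  ∀ i : Fin n, ¬((true, i) ∈ J ∧ (false, i) ∈ J)

/-- Signed characteristic vector of a subset of `±[n]`. -/
def chiF {n : ℕ} (J : Finset (SIdx n)) : Fin n → ℝ := fun i =>
  if (true, i) ∈ J then 1 else if (false, i) ∈ J then -1 else 0

/-- `J` is an ideal of the signed poset `P`. -/
def IsIdeal {n : ℕ} (P : Set (Fin n → ℝ)) (J : Finset (SIdx n)) : Prop :=
  Isotropic J ∧ ∀ α ∈ P, 0 ≤ dotR (chiF J) α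

/-- Comparability in the Fischer order of `P`. -/
def fComp {n : ℕ} (P : Set (Fin n → ℝ)) (a b : SIdx n) : Prop :=
  fLT P (some a) (some b) ∨ fLT P (some b) (some a)

/-- One step in the comparability graph on a subset `J` of `±[n]`. -/
def connStep {n : ℕ} (P : Set (Fin n → ℝ)) (J : Finset (SIdx n)) (a b : SIdx n) : Prop :=
  a ∈ J ∧ b ∈ J ∧ fComp P a b

/-- `J` is connected: nonempty, and any two of its elements are joined by a path inside `J`
in the comparability graph of the Fischer order of `P`. -/
def IsConnectedIdl {n : ℕ} (P : Set (Fin n → ℝ)) (J : Finset (SIdx n)) : Prop :=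
  J.Nonempty ∧ ∀ a ∈ J, ∀ b ∈ J, Relation.ReflTransGen (connStep P J) a b

/-- A connected ideal of `P`. -/
def IsConnIdeal {n : ℕ} (P : Set (Fin n → ℝ)) (J : Finset (SIdx n)) : Prop :=
  IsIdeal P J ∧ IsConnectedIdl P J

/-- Support `supp J = {|a| : a ∈ J}`. -/
def suppF {n : ℕ} (J : Finset (SIdx n)) : Finset (Fin n) := J.image Prod.snd

/-- `J` and `K` intersect nontrivially. -/
def NontrivInter {n : ℕ} (J K : Finset (SIdx n)) : Prop :=
  (suppF J ∩ suppF K).Nonempty ∧ ¬J ⊆ K ∧ ¬K ⊆ J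

/-- `J` and `K` intersect trivially. -/
def TrivInter {n : ℕ} (J K : Finset (SIdx n)) : Prop := ¬NontrivInter J K

/-- A signed permutation, as an anti-symmetric bijection of `±[n]`. -/
def IsSPerm {n : ℕ} (w : SIdx n ≃ SIdx n) : Prop := ∀ a, w (negS a) = negS (w a)

/-- Linear action of a signed permutation on `ℝ^n`, determined by `w(e_i) = v(w(+i))`. -/
def spAct {n : ℕ} (w : SIdx n ≃ SIdx n) (x : Fin n → ℝ) : Fin n → ℝ :=
  ∑ i, x i • vS (w (true, i))

/-- `w` is a linear extension of `P`: a signed permutation with `P ⊆ w(Φ⁺_{B_n})`. -/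
def IsLinExt {n : ℕ} (P : Set (Fin n → ℝ)) (w : SIdx n ≃ SIdx n) : Prop :=
  IsSPerm w ∧ ∀ α ∈ P, ∃ β ∈ BnPos n, α = spAct w β

/-- The (finite) set `𝓛(P)` of linear extensions of `P`. -/
def linExts (n : ℕ) (P : Set (Fin n → ℝ)) : Finset (SIdx n ≃ SIdx n) :=
  Finset.univ.filter (IsLinExt P)

/-- Simple roots of `Φ_{B_n}`: `α_i = e_i - e_{i+1}` for `i < n - 1`, `α_{n-1} = e_{n-1}`
(0-indexed). -/
def simpleRoot (n : ℕ) (i : Fin n) : Fin n → ℝ := fun j =>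
  (if j = i then (1 : ℝ) else 0) - if (j : ℕ) = (i : ℕ) + 1 then 1 else 0

/-- `J^w_m = {w(1), …, w(m)}` (0-indexed: the images under `w` of `+1, …, +(m+1)`). -/
def JwSet {n : ℕ} (w : SIdx n ≃ SIdx n) (m : Fin n) : Finset (SIdx n) :=
  (Finset.univ.filter (fun j : Fin n => j ≤ m)).image (fun j => w (true, j))

/-- An extensible ideal of `P`. -/
def Extensible (n : ℕ) (P : Set (Fin n → ℝ)) (J : Finset (SIdx n)) : Prop :=
  ∃ I : Finset (SIdx n), I.Nonempty ∧ Disjoint I J ∧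
    IsIdeal P (J ∪ I) ∧ IsIdeal P (J ∪ I.image negS)

/-- The finite set `J_conn(P)` of connected ideals of `P`. -/
def JconnF (n : ℕ) (P : Set (Fin n → ℝ)) : Finset (Finset (SIdx n)) :=
  Finset.univ.filter (IsConnIdeal P)

/-- Membership in `Π(P)`: an unordered pair of nontrivially intersecting connected ideals. -/
def inPiP {n : ℕ} (P : Set (Fin n → ℝ)) (p : Sym2 (Finset (SIdx n))) : Prop :=
  ∃ J K : Finset (SIdx n),
    p = s(J, K) ∧ IsConnIdeal P J ∧ IsConnIdeal P K ∧ NontrivInter J K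

/-- The finite set `Π(P)` of unordered pairs of nontrivially intersecting connected ideals. -/
def PiP (n : ℕ) (P : Set (Fin n → ℝ)) : Finset (Sym2 (Finset (SIdx n))) :=
  Finset.univ.filter (inPiP P)

/-- No connected ideal of `P` intersects two or more other connected ideals nontrivially. -/
def NoDoubleNontriv (n : ℕ) (P : Set (Fin n → ℝ)) : Prop :=
  ∀ J K K' : Finset (SIdx n), IsConnIdeal P J → IsConnIdeal P K → IsConnIdeal P K' →
    NontrivInter J K → NontrivInter J K' → K = K'

/-- The connected component of `a` inside `J` (w.r.t. the Fischer comparability graph). -/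
def componentIn {n : ℕ} (P : Set (Fin n → ℝ)) (J : Finset (SIdx n)) (a : SIdx n) :
    Finset (SIdx n) :=
  J.filter (fun b => Relation.ReflTransGen (connStep P J) a b)

/-- The set of connected components of `J`. -/
def componentsOf {n : ℕ} (P : Set (Fin n → ℝ)) (J : Finset (SIdx n)) :
    Finset (Finset (SIdx n)) :=
  J.image (componentIn P J)

/-- The signed support `supp±(f) = {sgn(f_i)·i : f_i ≠ 0}` of a vector `f ∈ ℝ^n`. -/
def suppPM {n : ℕ} (f : Fin n → ℝ) : Finset (SIdx n) :=
  Finset.univ.filter (fun a : SIdx n => if a.1 then 0 < f a.2 else f a.2 < 0)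

/-- Index type for the variables `U_J`, `J` a connected ideal of `P`. -/
abbrev ConnIdx (n : ℕ) (P : Set (Fin n → ℝ)) := {J : Finset (SIdx n) // IsConnIdeal P J}

/-- Integer signed characteristic vector, as an exponent vector for Laurent monomials. -/
def chiZ {n : ℕ} (J : Finset (SIdx n)) : Fin n →₀ ℤ :=
  Finsupp.equivFunOnFinite.symm (fun i =>
    if (true, i) ∈ J then 1 else if (false, i) ∈ J then -1 else 0)

/-- The map `φ : k[U_J : J ∈ J_conn(P)] → k[x_1^{±1}, …, x_n^{±1}]`, `U_J ↦ x^{χ_J}`. -/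
def phiWt (n : ℕ) (P : Set (Fin n → ℝ)) (k : Type) [Field k] :
    MvPolynomial (ConnIdx n P) k →ₐ[k] AddMonoidAlgebra k (Fin n →₀ ℤ) :=
  MvPolynomial.aeval (fun J => AddMonoidAlgebra.single (chiZ J.val) 1)

/-- The binomial `syz(U_J, U_K) = U_J U_K - (∏_A U_A) (∏_B U_B)`, where `A` runs over the
connected components of `J ∩ K` and `B` over the connected components of `supp±(χ_J + χ_K)`. -/
def syzPoly (n : ℕ) (P : Set (Fin n → ℝ)) (k : Type) [Field k] (J K : ConnIdx n P) :
    MvPolynomial (ConnIdx n P) k :=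
  MvPolynomial.X J * MvPolynomial.X K -
    (∏ A ∈ Finset.univ.filter
        (fun A : ConnIdx n P => (A : Finset (SIdx n)) ∈ componentsOf P (J.val ∩ K.val)),
        MvPolynomial.X A) *
      ∏ B ∈ Finset.univ.filter
        (fun B : ConnIdx n P =>
          (B : Finset (SIdx n)) ∈ componentsOf P (suppPM (chiF J.val + chiF K.val))),
        MvPolynomial.X B

/-- `θ_1, …, θ_r` is a regular sequence: the ideal it generates is proper, and each `θ_{m+1}`
is a non-zero-divisor modulo the ideal generated by `θ_1, …, θ_m`. -/
def IsRegSeq {R : Type} [CommRing R] {r : ℕ} (θ : Fin r → R) : Prop :=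
  Ideal.span (Set.range θ) ≠ ⊤ ∧
    ∀ (m : ℕ) (hm : m < r) (x : R),
      θ ⟨m, hm⟩ * x ∈ Ideal.span (θ '' {j : Fin r | (j : ℕ) < m}) →
        x ∈ Ideal.span (θ '' {j : Fin r | (j : ℕ) < m})

/-- The induced signed poset `P_A = P ∩ span_ℝ{e_i : i ∈ A}`. -/
def inducedPoset (n : ℕ) (P : Set (Fin n → ℝ)) (A : Finset (Fin n)) : Set (Fin n → ℝ) :=
  {α | α ∈ P ∧ α ∈ Submodule.span ℝ (stdB n '' (A : Set (Fin n)))}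

/-- The major index of a signed permutation. -/
def majB {n : ℕ} (w : SIdx n ≃ SIdx n) : ℕ :=
  ∑ i ∈ Finset.univ.filter
      (fun i : Fin n => spAct w (simpleRoot n i) ∉ BnPos n), ((i : ℕ) + 1)

/-- `[m]_q = 1 + q + ⋯ + q^{m-1}` in `ℤ[q]`. -/
def qInt (m : ℕ) : Polynomial ℤ := ∑ t ∈ Finset.range m, Polynomial.X ^ t

/-- The symmetric function `{J, K} ↦ ⟨x, χ_J + χ_K⟩` on unordered pairs. -/
def pairDot {n : ℕ} (x : Fin n → ℝ) : Sym2 (Finset (SIdx n)) → ℝ :=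
  Sym2.lift ⟨fun J K => dotR x (chiF J + chiF K),
    fun J K => congrArg (dotR x) (add_comm (chiF J) (chiF K))⟩

/-- The symmetric function `{J, K} ↦ [|J| + |K|]_q` on unordered pairs. -/
def pairQ {n : ℕ} : Sym2 (Finset (SIdx n)) → Polynomial ℤ :=
  Sym2.lift ⟨fun J K => qInt (J.card + K.card),
    fun J K => congrArg qInt (Nat.add_comm J.card K.card)⟩

/-- The principal order ideal `I_≤(a)` in the Fischer order restricted to `±[n]`. -/
def Ile {n : ℕ} (P : Set (Fin n → ℝ)) (a : SIdx n) : Set (SIdx n) :=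
  {b | b = a ∨ fLT P (some b) (some a)}

/-- A set of signed indices is isotropic if it contains no pair `{i, -i}`. -/
def IsoSet {n : ℕ} (S : Set (SIdx n)) : Prop :=
  ∀ i : Fin n, ¬((true, i) ∈ S ∧ (false, i) ∈ S)

/-- A covering pair of the Fischer order of `P`. -/
def CovPair {n : ℕ} (P : Set (Fin n → ℝ)) (a b : Option (SIdx n)) : Prop :=
  fLT P a b ∧ ¬∃ c : Option (SIdx n), fLT P a c ∧ fLT P c b

/-- The set of covering roots of `P`. -/
def covRoots {n : ℕ} (P : Set (Fin n → ℝ)) : Set (Fin n → ℝ) :=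
  {x | ∃ a b : Option (SIdx n), CovPair P a b ∧ x = vO a - vO b}

/-- The set `J_ε = {i : ε_i = 1} ∪ {-i : ε_i = -1}` attached to a `{-1,0,1}`-vector. -/
def Jeps {n : ℕ} (ε : Fin n → ℝ) : Set (SIdx n) :=
  {a | (a.1 = true ∧ ε a.2 = 1) ∨ (a.1 = false ∧ ε a.2 = -1)}

/-!
A map sending variables to monomials has kernel spanned by the differences of monomials with the
same image, so the claim is that exponents with equal image are identified by the congruence which
the binomials `syz(U_J, U_K)` generate. Give `U_J` the weight `|J|`. Rewriting `U_J U_K` never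
raises the total weight, and lowers it exactly when `J` and `K` contain opposite elements, in which
case `χ_J + χ_K` cancels. Hence the ideals in a monomial of minimal weight in its class contain no
opposite elements, and they cover the signed support `D` of the image exponent. Among all ideals
through a given `a ∈ D` that occur in such minimal monomials take a maximal one, `C`. An ideal
`K` beside `C` that meets `C` lies in `C`, since otherwise either `K` or, after a weight-preserving
rewriting, `C ∪ K` would be larger; so `C` is the connected component of `a` in `D`, which depends
only on the image. Two monomials with the same image therefore share the factor `U_C` up to
congruence, and induction on the weight finishes the proof.
-/

section ToricIdeal

open MvPolynomial

variable {σ R G : Type*} [CommRing R]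

/-- The congruence on exponent vectors that an ideal of a polynomial ring induces: two exponents
are related when the corresponding monomials agree modulo the ideal. -/
def exponentCon (I : Ideal (MvPolynomial σ R)) : AddCon (σ →₀ ℕ) where
  r u v := Ideal.Quotient.mk I (monomial u 1) = Ideal.Quotient.mk I (monomial v 1)
  iseqv := ⟨fun _ => rfl, Eq.symm, Eq.trans⟩
  add' {u v u' v'} huv huv' := by
    have monomial_add (s t : σ →₀ ℕ) :
        (monomial (s + t) 1 : MvPolynomial σ R) = monomial s 1 * monomial t 1 := by
      rw [monomial_mul, one_mul]
    rw [monomial_add, monomial_add, map_mul, map_mul, huv, huv']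

theorem exponentCon_iff {I : Ideal (MvPolynomial σ R)} {u v : σ →₀ ℕ} :
    exponentCon I u v ↔ (monomial u 1 - monomial v 1 : MvPolynomial σ R) ∈ I :=
  Ideal.Quotient.mk_eq_mk_iff_sub_mem _ _

variable [AddCommMonoid G]

theorem aeval_single_monomial (w : σ → G) (u : σ →₀ ℕ) (c : R) :
    aeval (fun i => AddMonoidAlgebra.single (w i) (1 : R)) (monomial u c) =
      AddMonoidAlgebra.single (Finsupp.weight w u) c := by
  have prod_eq : (u.prod fun i e => AddMonoidAlgebra.single (w i) (1 : R) ^ e) =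
      AddMonoidAlgebra.single (Finsupp.weight w u) 1 := by
    induction u using Finsupp.induction_linear with
    | zero => simp [AddMonoidAlgebra.one_def]
    | add u v hu hv =>
      rw [Finsupp.prod_add_index' (by simp) (by simp [pow_add]), hu, hv, map_add,
        AddMonoidAlgebra.single_mul_single, one_mul]
    | single i e => simp [Finsupp.weight_single]
  rw [aeval_monomial, prod_eq]
  simp [AddMonoidAlgebra.single_mul_single]

theorem ker_aeval_single_le {w : σ → G} {I : Ideal (MvPolynomial σ R)}
    (hI : AddCon.ker (Finsupp.weight (R := ℕ) w) ≤ exponentCon I) :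
    RingHom.ker (aeval (R := R) fun i => AddMonoidAlgebra.single (w i) (1 : R)) ≤ I := by
  -- The quotient map factors through `aeval`: send `x^g` to the class of any `X^u` of weight `g`.
  let representative : G → σ →₀ ℕ := Function.invFun (Finsupp.weight w)
  let factor : AddMonoidAlgebra R G →ₗ[R] MvPolynomial σ R ⧸ I :=
    Finsupp.linearCombination R (fun g => Ideal.Quotient.mk I (monomial (representative g) 1)) ∘ₗ
      (AddMonoidAlgebra.coeffLinearEquiv R).toLinearMap
  have factor_comp : factor ∘ₗ (aeval fun i => AddMonoidAlgebra.single (w i) 1).toLinearMap =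
      (Ideal.Quotient.mkₐ R I).toLinearMap := by
    refine MvPolynomial.linearMap_ext fun u => LinearMap.ext_ring ?_
    have weight_representative :
        Finsupp.weight w (representative (Finsupp.weight w u)) = Finsupp.weight w u :=
      Function.invFun_eq ⟨u, rfl⟩
    have same_class : Ideal.Quotient.mk I (monomial (representative (Finsupp.weight w u)) 1) =
        Ideal.Quotient.mk I (monomial u 1) := hI weight_representative
    simpa [factor, aeval_single_monomial] using same_class
  intro p hp
  rw [← Ideal.Quotient.eq_zero_iff_mem]
  simpa [(RingHom.mem_ker).1 hp] using (LinearMap.congr_fun factor_comp p).symm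

theorem ker_aeval_single_eq_span {w : σ → G} {r : (σ →₀ ℕ) → (σ →₀ ℕ) → Prop}
    (hr : addConGen r = AddCon.ker (Finsupp.weight w)) :
    RingHom.ker (aeval (R := R) fun i => AddMonoidAlgebra.single (w i) (1 : R)) =
      Ideal.span {f | ∃ u v, r u v ∧ f = monomial u 1 - monomial v 1} := by
  refine le_antisymm (ker_aeval_single_le ?_) (Ideal.span_le.2 ?_)
  · rw [← hr, AddCon.addConGen_le]
    exact fun u v huv => exponentCon_iff.2 (Ideal.subset_span ⟨u, v, huv, rfl⟩)
  · rintro _ ⟨u, v, huv, rfl⟩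
    have weight_eq : Finsupp.weight w u = Finsupp.weight w v := by
      have : AddCon.ker (Finsupp.weight (R := ℕ) w) u v := hr ▸ AddCon.le_addConGen _ _ huv
      exact this
    rw [SetLike.mem_coe, RingHom.mem_ker, map_sub, aeval_single_monomial, aeval_single_monomial,
      weight_eq, sub_self]

end ToricIdeal

section SignedSets

variable {n : ℕ} {J K : Finset (SIdx n)} {a : SIdx n}

theorem negS_negS (a : SIdx n) : negS (negS a) = a := by simp [negS]

theorem vS_negS (a : SIdx n) : vS (negS a) = -vS a := by
  obtain ⟨s, i⟩ := a
  cases s <;> simp [negS, vS, rsgn]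

theorem vS_sub_vS_or_vS_of_mem_BnRoots {α : Fin n → ℝ} (hα : α ∈ BnRoots n) :
    (∃ a b : SIdx n, α = vS a - vS b) ∨ ∃ a : SIdx n, α = vS a := by
  rcases hα with ⟨i, j, -, s, t, rfl⟩ | ⟨i, s, rfl⟩
  · exact .inl ⟨(s, i), negS (t, j), by rw [vS_negS, sub_neg_eq_add]; rfl⟩
  · exact .inr ⟨(s, i), rfl⟩

theorem dotR_eq_dotProduct (f g : Fin n → ℝ) : dotR f g = f ⬝ᵥ g := rfl

theorem dotR_vS (f : Fin n → ℝ) (a : SIdx n) : dotR f (vS a) = rsgn a.1 * f a.2 := by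
  rw [dotR_eq_dotProduct, vS, dotProduct_smul, stdB, dotProduct_single_one, smul_eq_mul]

theorem dotR_vS_negS (f : Fin n → ℝ) (a : SIdx n) : dotR f (vS (negS a)) = -dotR f (vS a) := by
  simp only [vS_negS, dotR_eq_dotProduct, dotProduct_neg]

theorem mem_suppPM {f : Fin n → ℝ} : a ∈ suppPM f ↔ 0 < dotR f (vS a) := by
  obtain ⟨s, i⟩ := a
  cases s <;> simp [suppPM, dotR_vS, rsgn]

theorem isotropic_suppPM (f : Fin n → ℝ) : Isotropic (suppPM f) := by
  rintro i ⟨hpos, hneg⟩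
  have : dotR f (vS (false, i)) = -dotR f (vS (true, i)) := dotR_vS_negS f (true, i)
  linarith [mem_suppPM.1 hpos, mem_suppPM.1 hneg]

theorem Isotropic.subset (hK : Isotropic K) (hJK : J ⊆ K) : Isotropic J :=
  fun i h => hK i ⟨hJK h.1, hJK h.2⟩

theorem Isotropic.negS_notMem (hJ : Isotropic J) (ha : a ∈ J) : negS a ∉ J := by
  obtain ⟨s, i⟩ := a
  intro hneg
  cases s
  · exact hJ i ⟨hneg, ha⟩
  · exact hJ i ⟨ha, hneg⟩

theorem Isotropic.dotR_chiF_vS (hJ : Isotropic J) (a : SIdx n) :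
    dotR (chiF J) (vS a) = if a ∈ J then 1 else if negS a ∈ J then -1 else 0 := by
  obtain ⟨s, i⟩ := a
  have := hJ i
  cases s <;> simp only [dotR_vS, rsgn, chiF, negS] <;> grind

theorem Isotropic.suppPM_chiF (hJ : Isotropic J) : suppPM (chiF J) = J := by
  ext a
  rw [mem_suppPM, hJ.dotR_chiF_vS]
  split_ifs <;> simp_all

theorem Isotropic.chiF_eq_sum_vS (hJ : Isotropic J) : chiF J = ∑ a ∈ J, vS a := by
  ext i
  have sum_apply : ∑ a ∈ J, vS a i =
      (if (true, i) ∈ J then 1 else 0) + (if (false, i) ∈ J then -1 else 0) := by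
    rw [← Finset.univ_inter J, ← Finset.sum_ite_mem, Fintype.sum_prod_type, Fintype.sum_bool,
      Fintype.sum_eq_single i (by simp +contextual [vS, stdB]),
      Fintype.sum_eq_single i (by simp +contextual [vS, stdB])]
    simp [vS, stdB, rsgn]
  have := hJ i
  grind [chiF, Finset.sum_apply]

theorem Isotropic.mem_suppPM_chiF_add (hJ : Isotropic J) (hK : Isotropic K) :
    a ∈ suppPM (chiF J + chiF K) ↔ a ∈ J ∪ K ∧ negS a ∉ J ∪ K := by
  have := hJ.negS_notMem (a := a)
  have := hK.negS_notMem (a := a)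
  rw [mem_suppPM, dotR_eq_dotProduct, add_dotProduct, ← dotR_eq_dotProduct, ← dotR_eq_dotProduct,
    hJ.dotR_chiF_vS, hK.dotR_chiF_vS, Finset.mem_union, Finset.mem_union]
  split_ifs <;> norm_num <;> tauto

theorem Isotropic.chiF_add_chiF (hJ : Isotropic J) (hK : Isotropic K) :
    chiF J + chiF K = chiF (J ∩ K) + chiF (suppPM (chiF J + chiF K)) := by
  ext i
  have hJi := hJ i
  have hKi := hK i
  simp only [Pi.add_apply]
  rw [chiF, chiF, chiF, chiF]
  simp only [hJ.mem_suppPM_chiF_add hK, Finset.mem_inter, Finset.mem_union, negS, Bool.not_true,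
    Bool.not_false]
  grind

theorem Isotropic.suppPM_chiF_add_eq_union (hJ : Isotropic J) (hK : Isotropic K)
    (hJK : ∀ a ∈ J, negS a ∉ K) : suppPM (chiF J + chiF K) = J ∪ K := by
  have hKJ (a : SIdx n) (ha : a ∈ K) : negS a ∉ J := fun hneg =>
    hJK _ hneg (by rwa [negS_negS])
  ext a
  rw [hJ.mem_suppPM_chiF_add hK, and_iff_left_iff_imp, Finset.mem_union, Finset.mem_union, not_or]
  rintro (ha | ha)
  · exact ⟨hJ.negS_notMem ha, hJK a ha⟩
  · exact ⟨hKJ a ha, hK.negS_notMem ha⟩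

theorem Isotropic.card_suppPM_chiF_add_lt (hJ : Isotropic J) (hK : Isotropic K) (haJ : a ∈ J)
    (haK : negS a ∈ K) : (suppPM (chiF J + chiF K)).card < (J ∪ K).card := by
  refine Finset.card_lt_card (Finset.ssubset_iff_of_subset ?_ |>.2
    ⟨a, Finset.mem_union_left _ haJ, fun ha => ?_⟩)
  · exact fun b hb => ((hJ.mem_suppPM_chiF_add hK).1 hb).1
  · exact ((hJ.mem_suppPM_chiF_add hK).1 ha).2 (Finset.mem_union_right _ haK)

theorem suppF_inter_nonempty_iff :
    (suppF J ∩ suppF K).Nonempty ↔ ∃ a ∈ J, a ∈ K ∨ negS a ∈ K := by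
  constructor
  · rintro ⟨i, hi⟩
    simp only [suppF, Finset.mem_inter, Finset.mem_image, Prod.exists, exists_eq_right] at hi
    obtain ⟨⟨s, hs⟩, ⟨t, ht⟩⟩ := hi
    refine ⟨(s, i), hs, ?_⟩
    cases s <;> cases t <;> simp_all [negS]
  · rintro ⟨a, haJ, haK⟩
    refine ⟨a.2, Finset.mem_inter.2 ⟨Finset.mem_image_of_mem _ haJ, Finset.mem_image.2 ?_⟩⟩
    exact haK.elim (fun h => ⟨a, h, rfl⟩) fun h => ⟨negS a, h, rfl⟩

theorem intCast_chiZ (J : Finset (SIdx n)) (i : Fin n) : ((chiZ J i : ℤ) : ℝ) = chiF J i := by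
  simp only [chiZ, chiF, Finsupp.equivFunOnFinite_symm_apply_apply]
  split_ifs <;> simp

end SignedSets

section Ideals

variable {n : ℕ} {P : Set (Fin n → ℝ)} {J K : Finset (SIdx n)} {a b : SIdx n}

theorem fLT_some_iff :
    fLT P (some a) (some b) ↔ vS a - vS b ∈ P ∨ b = negS a ∧ vS a ∈ P := by
  simp [fLT, vO, negO]

theorem mem_suppPM_of_fLT {f : Fin n → ℝ} (hf : f ∈ weightCone P)
    (hab : fLT P (some a) (some b)) (hb : b ∈ suppPM f) : a ∈ suppPM f := by
  rw [mem_suppPM] at hb ⊢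
  rcases fLT_some_iff.1 hab with hroot | ⟨rfl, hroot⟩
  · have := hf _ hroot
    rw [dotR_eq_dotProduct, dotProduct_sub, ← dotR_eq_dotProduct, ← dotR_eq_dotProduct] at this
    linarith
  · linarith [hf _ hroot, dotR_vS_negS f a]

theorem isIdeal_iff (hP : P ⊆ BnRoots n) :
    IsIdeal P J ↔ Isotropic J ∧ ∀ a b, fLT P (some a) (some b) → b ∈ J → a ∈ J := by
  refine and_congr_right fun hJ => ⟨fun hcone a b hab hb => ?_, fun hdown α hα => ?_⟩
  · rw [← hJ.suppPM_chiF] at hb ⊢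
    exact mem_suppPM_of_fLT hcone hab hb
  · rcases vS_sub_vS_or_vS_of_mem_BnRoots (hP hα) with ⟨a, b, rfl⟩ | ⟨a, rfl⟩
    · have hb_to_a := hdown a b (fLT_some_iff.2 (.inl hα))
      have ha_to_b := hdown (negS b) (negS a)
        (fLT_some_iff.2 (.inl (by rwa [vS_negS, vS_negS, neg_sub_neg])))
      rw [dotR_eq_dotProduct, dotProduct_sub, ← dotR_eq_dotProduct, ← dotR_eq_dotProduct,
        hJ.dotR_chiF_vS, hJ.dotR_chiF_vS]
      split_ifs <;> simp_all
    · have hneg : negS a ∉ J := fun hneg =>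
        hJ.negS_notMem (hdown a _ (fLT_some_iff.2 (.inr ⟨rfl, hα⟩)) hneg) hneg
      rw [hJ.dotR_chiF_vS, if_neg hneg]
      split_ifs <;> simp

theorem isIdeal_suppPM (hP : P ⊆ BnRoots n) {f : Fin n → ℝ} (hf : f ∈ weightCone P) :
    IsIdeal P (suppPM f) :=
  (isIdeal_iff hP).2 ⟨isotropic_suppPM f, fun _ _ => mem_suppPM_of_fLT hf⟩

theorem IsIdeal.suppPM_chiF_add (hP : P ⊆ BnRoots n) (hJ : IsIdeal P J) (hK : IsIdeal P K) :
    IsIdeal P (suppPM (chiF J + chiF K)) := by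
  refine isIdeal_suppPM hP fun α hα => ?_
  rw [dotR_eq_dotProduct, add_dotProduct]
  exact add_nonneg (hJ.2 α hα) (hK.2 α hα)

theorem IsIdeal.inter (hP : P ⊆ BnRoots n) (hJ : IsIdeal P J) (hK : IsIdeal P K) :
    IsIdeal P (J ∩ K) := by
  rw [isIdeal_iff hP] at hJ hK ⊢
  refine ⟨hJ.1.subset Finset.inter_subset_left, fun a b hab hb => ?_⟩
  rw [Finset.mem_inter] at hb ⊢
  exact ⟨hJ.2 a b hab hb.1, hK.2 a b hab hb.2⟩

end Ideals

section Components

open Relation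

variable {n : ℕ} {P : Set (Fin n → ℝ)} {J K D : Finset (SIdx n)} {a b c : SIdx n}

instance connStep_symm : Std.Symm (connStep P D) where
  symm _ _ h := ⟨h.2.1, h.1, h.2.2.symm⟩

theorem connStep_mono (hJK : J ⊆ K) : connStep P J ≤ connStep P K :=
  fun _ _ h => ⟨hJK h.1, hJK h.2.1, h.2.2⟩

theorem isConnectedIdl_of_forall_reachable (ha : a ∈ D)
    (hreach : ∀ b ∈ D, ReflTransGen (connStep P D) a b) : IsConnectedIdl P D :=
  ⟨⟨a, ha⟩, fun b hb c hc => (symm (hreach b hb)).trans (hreach c hc)⟩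

theorem IsConnectedIdl.union (hJ : IsConnectedIdl P J) (hK : IsConnectedIdl P K) (haJ : a ∈ J)
    (haK : a ∈ K) : IsConnectedIdl P (J ∪ K) := by
  refine isConnectedIdl_of_forall_reachable (Finset.mem_union_left _ haJ) fun b hb => ?_
  rcases Finset.mem_union.1 hb with hb | hb
  · exact ReflTransGen.mono (connStep_mono Finset.subset_union_left) _ _ (hJ.2 a haJ b hb)
  · exact ReflTransGen.mono (connStep_mono Finset.subset_union_right) _ _ (hK.2 a haK b hb)

theorem mem_componentIn :
    b ∈ componentIn P D a ↔ b ∈ D ∧ ReflTransGen (connStep P D) a b := by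
  simp [componentIn]

theorem componentIn_subset (D : Finset (SIdx n)) (a : SIdx n) : componentIn P D a ⊆ D :=
  Finset.filter_subset _ _

theorem self_mem_componentIn (ha : a ∈ D) : a ∈ componentIn P D a :=
  mem_componentIn.2 ⟨ha, .refl⟩

theorem mem_componentIn_of_fComp (hb : b ∈ componentIn P D a) (hc : c ∈ D) (hbc : fComp P b c) :
    c ∈ componentIn P D a :=
  mem_componentIn.2 ⟨hc, (mem_componentIn.1 hb).2.tail ⟨componentIn_subset D a hb, hc, hbc⟩⟩

theorem componentIn_eq_of_mem (hb : b ∈ componentIn P D a) :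
    componentIn P D b = componentIn P D a := by
  have hab := (mem_componentIn.1 hb).2
  ext c
  rw [mem_componentIn, mem_componentIn]
  exact and_congr_right fun _ => ⟨hab.trans, (symm hab).trans⟩

theorem isConnectedIdl_componentIn (ha : a ∈ D) : IsConnectedIdl P (componentIn P D a) := by
  refine isConnectedIdl_of_forall_reachable (self_mem_componentIn ha) fun b hb => ?_
  induction (mem_componentIn.1 hb).2 with
  | refl => exact .refl
  | @tail c d hac hcd ih =>
    have hc : c ∈ componentIn P D a := mem_componentIn.2 ⟨hcd.1, hac⟩
    exact (ih hc).tail ⟨hc, mem_componentIn_of_fComp hc hcd.2.1 hcd.2.2, hcd.2.2⟩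

theorem IsIdeal.isConnIdeal_componentIn (hP : P ⊆ BnRoots n) (hD : IsIdeal P D) (ha : a ∈ D) :
    IsConnIdeal P (componentIn P D a) := by
  refine ⟨?_, isConnectedIdl_componentIn ha⟩
  rw [isIdeal_iff hP] at hD ⊢
  refine ⟨hD.1.subset (componentIn_subset D a), fun b c hbc hc => ?_⟩
  exact mem_componentIn_of_fComp hc (hD.2 b c hbc (componentIn_subset D a hc)) (.inr hbc)

theorem IsConnectedIdl.componentIn_eq (hJ : IsConnectedIdl P J) (hJD : J ⊆ D)
    (hclosed : ∀ b ∈ J, ∀ c ∈ D, fComp P b c → c ∈ J) (ha : a ∈ J) :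
    componentIn P D a = J := by
  ext b
  rw [mem_componentIn]
  constructor
  · rintro ⟨-, hab⟩
    induction hab with
    | refl => exact ha
    | tail _ hcd ih => exact hclosed _ ih _ hcd.2.1 hcd.2.2
  · exact fun hb => ⟨hJD hb, ReflTransGen.mono (connStep_mono hJD) _ _ (hJ.2 a ha b hb)⟩

/-- The connected components of `D` that are ideals, as indices of variables `U_A`. When `D` is an
ideal these are all of its components. -/
def componentIdeals (P : Set (Fin n → ℝ)) (D : Finset (SIdx n)) : Finset (ConnIdx n P) :=
  Finset.univ.filter fun A => (A : Finset (SIdx n)) ∈ componentsOf P D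

theorem mem_componentIdeals {A : ConnIdx n P} :
    A ∈ componentIdeals P D ↔ ∃ a ∈ D, componentIn P D a = A.val := by
  simp [componentIdeals, componentsOf]

theorem eq_componentIn_of_mem_componentIdeals {A : ConnIdx n P} (hA : A ∈ componentIdeals P D)
    (ha : a ∈ A.val) : A.val = componentIn P D a := by
  obtain ⟨b, -, hb⟩ := mem_componentIdeals.1 hA
  rw [← hb] at ha ⊢
  exact (componentIn_eq_of_mem ha).symm

theorem componentIdeals_eq_singleton (A : ConnIdx n P) : componentIdeals P A.val = {A} := by
  have componentIn_eq {a : SIdx n} (ha : a ∈ A.val) : componentIn P A.val a = A.val :=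
    A.2.2.componentIn_eq subset_rfl (fun _ _ _ hc _ => hc) ha
  obtain ⟨a, ha⟩ := A.2.2.1
  ext B
  rw [mem_componentIdeals, Finset.mem_singleton]
  constructor
  · rintro ⟨b, hb, hB⟩
    exact Subtype.ext (hB.symm.trans (componentIn_eq hb))
  · rintro rfl
    exact ⟨a, ha, componentIn_eq ha⟩

theorem IsIdeal.biUnion_componentIdeals (hP : P ⊆ BnRoots n) (hD : IsIdeal P D) :
    (componentIdeals P D).biUnion Subtype.val = D := by
  ext a
  simp only [Finset.mem_biUnion, mem_componentIdeals]
  constructor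
  · rintro ⟨A, ⟨b, -, hA⟩, ha⟩
    exact componentIn_subset D b (hA ▸ ha)
  · exact fun ha => ⟨⟨_, hD.isConnIdeal_componentIn hP ha⟩, ⟨a, ha, rfl⟩, self_mem_componentIn ha⟩

theorem pairwiseDisjoint_componentIdeals (P : Set (Fin n → ℝ)) (D : Finset (SIdx n)) :
    (componentIdeals P D : Set (ConnIdx n P)).PairwiseDisjoint Subtype.val := by
  refine fun A hA B hB hAB => Finset.disjoint_left.2 fun a haA haB => hAB (Subtype.ext ?_)
  rw [eq_componentIn_of_mem_componentIdeals hA haA, eq_componentIn_of_mem_componentIdeals hB haB]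

theorem IsIdeal.sum_componentIdeals (hP : P ⊆ BnRoots n) (hD : IsIdeal P D) {M : Type*}
    [AddCommMonoid M] (h : SIdx n → M) :
    ∑ A ∈ componentIdeals P D, ∑ a ∈ A.val, h a = ∑ a ∈ D, h a := by
  rw [← Finset.sum_biUnion (pairwiseDisjoint_componentIdeals P D), hD.biUnion_componentIdeals hP]

end Components

section SyzygyCongruence

open Finsupp

variable {n : ℕ} {P : Set (Fin n → ℝ)} {J K : ConnIdx n P} {m : ConnIdx n P →₀ ℕ}

/-- The exponent of the squarefree monomial `∏_A U_A` over the connected components `A` of `D`. -/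
def componentExponent (P : Set (Fin n → ℝ)) (D : Finset (SIdx n)) : ConnIdx n P →₀ ℕ :=
  ∑ A ∈ componentIdeals P D, single A 1

/-- The exponent of the monomial subtracted from `U_J U_K` in `syz(U_J, U_K)`. -/
def syzExponent (J K : ConnIdx n P) : ConnIdx n P →₀ ℕ :=
  componentExponent P (J.val ∩ K.val) + componentExponent P (suppPM (chiF J.val + chiF K.val))

/-- The pairs of exponents of the two monomials of a binomial `syz(U_J, U_K)`. -/
def SyzRel (u v : ConnIdx n P →₀ ℕ) : Prop :=
  ∃ J K : ConnIdx n P,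
    NontrivInter J.val K.val ∧ u = single J 1 + single K 1 ∧ v = syzExponent J K

/-- Equality of monomials modulo the binomials `syz(U_J, U_K)`, as a congruence on exponents. -/
def syzCon (P : Set (Fin n → ℝ)) : AddCon (ConnIdx n P →₀ ℕ) := addConGen SyzRel

/-- The degree in which `U_J` has weight `|J|`. -/
def cardWeight : (ConnIdx n P →₀ ℕ) →+ ℕ := weight fun J => J.val.card

/-- The exponent vector in `ℝ^n` of the image under `φ` of a monomial in the `U_J`. -/
def chiWeight : (ConnIdx n P →₀ ℕ) →+ (Fin n → ℝ) := weight fun J => chiF J.val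

theorem cardWeight_single (J : ConnIdx n P) : cardWeight (single J 1) = J.val.card := by
  simp [cardWeight, weight_single]

theorem chiWeight_single (J : ConnIdx n P) : chiWeight (single J 1) = chiF J.val := by
  simp [chiWeight, weight_single]

theorem ker_weight_chiZ :
    AddCon.ker (weight (R := ℕ) fun J : ConnIdx n P => chiZ J.val) = AddCon.ker chiWeight := by
  have cast_weight (m : ConnIdx n P →₀ ℕ) (i : Fin n) :
      ((weight (fun J : ConnIdx n P => chiZ J.val) m i : ℤ) : ℝ) = chiWeight m i := by
    simp [chiWeight, weight_apply, Finsupp.sum, finsetSum_apply, intCast_chiZ]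
  ext m m'
  simp only [AddCon.ker_rel, Finsupp.ext_iff, funext_iff, ← cast_weight, Int.cast_inj]

theorem map_componentExponent {M : Type*} [AddCommMonoid M] (hP : P ⊆ BnRoots n)
    (w : (ConnIdx n P →₀ ℕ) →+ M) {h : SIdx n → M}
    (hw : ∀ A : ConnIdx n P, w (single A 1) = ∑ a ∈ A.val, h a) {D : Finset (SIdx n)}
    (hD : IsIdeal P D) : w (componentExponent P D) = ∑ a ∈ D, h a := by
  rw [componentExponent, map_sum, ← hD.sum_componentIdeals hP]
  exact Finset.sum_congr rfl fun A _ => hw A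

theorem cardWeight_syzExponent (hP : P ⊆ BnRoots n) (J K : ConnIdx n P) :
    cardWeight (syzExponent J K) =
      (J.val ∩ K.val).card + (suppPM (chiF J.val + chiF K.val)).card := by
  have cardWeight_eq {D : Finset (SIdx n)} (hD : IsIdeal P D) :
      cardWeight (componentExponent P D) = D.card :=
    (map_componentExponent hP cardWeight
      (fun A => (cardWeight_single A).trans (Finset.card_eq_sum_ones _)) hD).trans
      (Finset.card_eq_sum_ones D).symm
  rw [syzExponent, map_add, cardWeight_eq (J.2.1.inter hP K.2.1),
    cardWeight_eq (J.2.1.suppPM_chiF_add hP K.2.1)]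

theorem chiWeight_syzExponent (hP : P ⊆ BnRoots n) (J K : ConnIdx n P) :
    chiWeight (syzExponent J K) = chiF J.val + chiF K.val := by
  have weight_eq {D : Finset (SIdx n)} (hD : IsIdeal P D) :
      chiWeight (componentExponent P D) = chiF D :=
    (map_componentExponent hP chiWeight
      (fun A => (chiWeight_single A).trans A.2.1.1.chiF_eq_sum_vS) hD).trans
      hD.1.chiF_eq_sum_vS.symm
  rw [syzExponent, map_add, weight_eq (J.2.1.inter hP K.2.1),
    weight_eq (J.2.1.suppPM_chiF_add hP K.2.1), ← J.2.1.1.chiF_add_chiF K.2.1.1]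

theorem syzCon_le_ker_chiWeight (hP : P ⊆ BnRoots n) : syzCon P ≤ AddCon.ker chiWeight := by
  refine AddCon.addConGen_le.2 ?_
  rintro _ _ ⟨J, K, -, rfl, rfl⟩
  rw [AddCon.ker_rel, chiWeight_syzExponent hP, map_add, chiWeight_single, chiWeight_single]

theorem exists_eq_single_add {σ : Type*} {u : σ →₀ ℕ} {i : σ} (hi : i ∈ u.support) :
    ∃ r, u = single i 1 + r :=
  ⟨u - single i 1, by rw [add_comm, sub_add_single_one_cancel (mem_support_iff.1 hi)]⟩

theorem NontrivInter.exists_syzCon (hJK : NontrivInter J.val K.val) (hJ : J ∈ m.support)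
    (hK : K ∈ m.support) :
    ∃ r, m = single J 1 + single K 1 + r ∧ syzCon P m (syzExponent J K + r) := by
  have hne : K ≠ J := fun h => hJK.2.1 (h ▸ subset_rfl)
  obtain ⟨r, rfl⟩ := exists_eq_single_add hJ
  obtain ⟨r, rfl⟩ := exists_eq_single_add (i := K) (u := r) (by
    simpa [single_apply, hne.symm] using hK)
  refine ⟨r, (add_assoc _ _ _).symm, ?_⟩
  rw [← add_assoc]
  exact (syzCon P).add (AddCon.le_addConGen _ _ ⟨J, K, hJK, rfl, rfl⟩) ((syzCon P).refl r)

end SyzygyCongruence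

section MinimalRepresentatives

open Finsupp

variable {n : ℕ} {P : Set (Fin n → ℝ)} {J K : ConnIdx n P} {m m' : ConnIdx n P →₀ ℕ} {a : SIdx n}

/-- No two ideals occurring in the monomial `U^m` contain opposite elements of `±[n]`. -/
def Coherent (m : ConnIdx n P →₀ ℕ) : Prop :=
  ∀ J ∈ m.support, ∀ K ∈ m.support, ∀ a ∈ J.val, negS a ∉ K.val

/-- `m` has the least `cardWeight` in its class modulo the binomials `syz(U_J, U_K)`. -/
def IsCardMinimal (m : ConnIdx n P →₀ ℕ) : Prop :=
  ∀ m', syzCon P m m' → cardWeight m ≤ cardWeight m'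

/-- `U_J` divides some monomial of minimal `cardWeight` that agrees with `U^m` modulo the binomials
`syz(U_J, U_K)`. -/
def OccursMinimally (m : ConnIdx n P →₀ ℕ) (J : ConnIdx n P) : Prop :=
  ∃ m', syzCon P m m' ∧ IsCardMinimal m' ∧ J ∈ m'.support

theorem dotR_chiWeight (m : ConnIdx n P →₀ ℕ) (α : Fin n → ℝ) :
    dotR (chiWeight m) α = ∑ J ∈ m.support, m J * dotR (chiF J.val) α := by
  simp only [chiWeight, weight_apply, Finsupp.sum, dotR_eq_dotProduct, sum_dotProduct]
  exact Finset.sum_congr rfl fun J _ => (smul_dotProduct _ _ _).trans (nsmul_eq_mul _ _)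

theorem exists_mem_of_mem_suppPM_chiWeight (ha : a ∈ suppPM (chiWeight m)) :
    ∃ J ∈ m.support, a ∈ J.val := by
  contrapose! ha
  rw [mem_suppPM, not_lt, dotR_chiWeight]
  refine Finset.sum_nonpos fun J hJ => mul_nonpos_of_nonneg_of_nonpos (Nat.cast_nonneg _) ?_
  rw [J.2.1.1.dotR_chiF_vS, if_neg (ha J hJ)]
  split_ifs <;> norm_num

theorem Coherent.mem_suppPM_chiWeight (hm : Coherent m) (hJ : J ∈ m.support) (ha : a ∈ J.val) :
    a ∈ suppPM (chiWeight m) := by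
  rw [mem_suppPM, dotR_chiWeight]
  refine Finset.sum_pos' (fun K hK => mul_nonneg (Nat.cast_nonneg _) ?_) ⟨J, hJ, mul_pos ?_ ?_⟩
  · rw [K.2.1.1.dotR_chiF_vS, if_neg (hm J hJ K hK a ha)]
    split_ifs <;> norm_num
  · exact Nat.cast_pos.2 (Nat.pos_of_ne_zero (mem_support_iff.1 hJ))
  · rw [J.2.1.1.dotR_chiF_vS, if_pos ha]
    norm_num

theorem exists_isCardMinimal (m : ConnIdx n P →₀ ℕ) : ∃ m', syzCon P m m' ∧ IsCardMinimal m' := by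
  obtain ⟨m', hm', hmin⟩ :=
    exists_minimalFor_of_wellFoundedLT (syzCon P m) cardWeight ⟨m, (syzCon P).refl m⟩
  exact ⟨m', hm', fun m'' h => le_of_not_gt fun hlt =>
    (hmin ((syzCon P).trans hm' h) hlt.le).not_gt hlt⟩

theorem IsCardMinimal.of_syzCon (hm : IsCardMinimal m) (hmm' : syzCon P m m')
    (hle : cardWeight m' ≤ cardWeight m) : IsCardMinimal m' :=
  fun m'' h => hle.trans (hm m'' ((syzCon P).trans hmm' h))

theorem IsCardMinimal.coherent (hP : P ⊆ BnRoots n) (hm : IsCardMinimal m) : Coherent m := by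
  intro J hJ K hK a haJ haK
  have hnontriv : NontrivInter J.val K.val :=
    ⟨suppF_inter_nonempty_iff.2 ⟨a, haJ, .inr haK⟩,
      fun h => K.2.1.1.negS_notMem (h haJ) haK, fun h => J.2.1.1.negS_notMem haJ (h haK)⟩
  obtain ⟨r, rfl, hrel⟩ := hnontriv.exists_syzCon hJ hK
  have hle := hm _ hrel
  rw [map_add, map_add, map_add, cardWeight_syzExponent hP, cardWeight_single,
    cardWeight_single] at hle
  have := J.2.1.1.card_suppPM_chiF_add_lt K.2.1.1 haJ haK
  have := Finset.card_union_add_card_inter J.val K.val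
  lia

theorem IsCardMinimal.exists_occursMinimally_union (hP : P ⊆ BnRoots n) (hm : IsCardMinimal m)
    (hJ : J ∈ m.support) (hK : K ∈ m.support) (hJK : NontrivInter J.val K.val) :
    ∃ L : ConnIdx n P, L.val = J.val ∪ K.val ∧ OccursMinimally m L := by
  have hcoherent := hm.coherent hP J hJ K hK
  have hunion := J.2.1.1.suppPM_chiF_add_eq_union K.2.1.1 hcoherent
  obtain ⟨a, haJ, haK⟩ := suppF_inter_nonempty_iff.1 hJK.1
  let L : ConnIdx n P := ⟨J.val ∪ K.val, hunion ▸ J.2.1.suppPM_chiF_add hP K.2.1,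
    J.2.2.union K.2.2 haJ (haK.resolve_right (hcoherent a haJ))⟩
  obtain ⟨r, rfl, hrel⟩ := hJK.exists_syzCon hJ hK
  refine ⟨L, rfl, _, hrel, hm.of_syzCon hrel ?_, ?_⟩
  · rw [map_add, map_add, map_add, cardWeight_syzExponent hP, cardWeight_single,
      cardWeight_single, hunion, add_comm (Finset.card _), Finset.card_union_add_card_inter]
  · have hL : syzExponent J K = componentExponent P (J.val ∩ K.val) + single L 1 := by
      rw [syzExponent, hunion, componentExponent.eq_def P (J.val ∪ K.val),
        componentIdeals_eq_singleton L, Finset.sum_singleton]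
    simp [hL]

theorem OccursMinimally.of_syzCon (h : syzCon P m m') (hJ : OccursMinimally m' J) :
    OccursMinimally m J := by
  obtain ⟨m'', hm'', hJ⟩ := hJ
  exact ⟨m'', (syzCon P).trans h hm'', hJ⟩

theorem subset_of_maximal_occursMinimally (hP : P ⊆ BnRoots n)
    (hmax : Maximal (fun L => a ∈ L.val ∧ OccursMinimally m L) J) (hmm' : syzCon P m m')
    (hm' : IsCardMinimal m') (hJ : J ∈ m'.support) (hK : K ∈ m'.support)
    (hJK : (J.val ∩ K.val).Nonempty) : K.val ⊆ J.val := by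
  by_contra hKJ
  have subset_of_occurs {L : ConnIdx n P} (hJL : J.val ⊆ L.val) (hL : OccursMinimally m L) :
      L.val ⊆ J.val := hmax.2 ⟨hJL hmax.1.1, hL⟩ hJL
  have hJK' : ¬J.val ⊆ K.val := fun h => hKJ (subset_of_occurs h ⟨m', hmm', hm', hK⟩)
  obtain ⟨b, hb⟩ := hJK
  have hnontriv : NontrivInter J.val K.val :=
    ⟨suppF_inter_nonempty_iff.2 ⟨b, (Finset.mem_inter.1 hb).1, .inl (Finset.mem_inter.1 hb).2⟩,
      hJK', hKJ⟩
  obtain ⟨L, hL, hoccurs⟩ := hm'.exists_occursMinimally_union hP hJ hK hnontriv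
  have hLJ := subset_of_occurs (hL ▸ Finset.subset_union_left) (hoccurs.of_syzCon hmm')
  exact hKJ (Finset.subset_union_right.trans (hL ▸ hLJ))

theorem eq_componentIn_of_maximal_occursMinimally (hP : P ⊆ BnRoots n)
    (hmax : Maximal (fun L => a ∈ L.val ∧ OccursMinimally m L) J) :
    J.val = componentIn P (suppPM (chiWeight m)) a := by
  obtain ⟨m', hmm', hm', hJ⟩ := hmax.1.2
  have hdown (K : ConnIdx n P) := ((isIdeal_iff hP).1 K.2.1).2
  rw [syzCon_le_ker_chiWeight hP hmm']
  refine (J.2.2.componentIn_eq (fun b => (hm'.coherent hP).mem_suppPM_chiWeight hJ)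
    (fun b hb c hc hbc => ?_) hmax.1.1).symm
  rcases hbc with hbc | hcb
  · obtain ⟨K, hK, hcK⟩ := exists_mem_of_mem_suppPM_chiWeight hc
    exact subset_of_maximal_occursMinimally hP hmax hmm' hm' hJ hK
      ⟨b, Finset.mem_inter.2 ⟨hb, hdown K b c hbc hcK⟩⟩ hcK
  · exact hdown J c b hcb hb

theorem exists_syzCon_single_componentIn_add (hP : P ⊆ BnRoots n)
    (ha : a ∈ suppPM (chiWeight m)) :
    ∃ (C : ConnIdx n P) (r : ConnIdx n P →₀ ℕ),
      C.val = componentIn P (suppPM (chiWeight m)) a ∧ syzCon P m (single C 1 + r) ∧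
        cardWeight (single C 1 + r) ≤ cardWeight m := by
  have occurs_nonempty : {L : ConnIdx n P | a ∈ L.val ∧ OccursMinimally m L}.Nonempty := by
    obtain ⟨m', hmm', hm'⟩ := exists_isCardMinimal m
    rw [syzCon_le_ker_chiWeight hP hmm'] at ha
    obtain ⟨L, hL, haL⟩ := exists_mem_of_mem_suppPM_chiWeight ha
    exact ⟨L, haL, m', hmm', hm', hL⟩
  obtain ⟨C, hmax⟩ := (Set.toFinite _).exists_maximal occurs_nonempty
  obtain ⟨m', hmm', hm', hC⟩ := hmax.1.2
  obtain ⟨r, rfl⟩ := exists_eq_single_add hC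
  exact ⟨C, r, eq_componentIn_of_maximal_occursMinimally hP hmax, hmm',
    hm' m ((syzCon P).symm hmm')⟩

theorem syzCon_zero_of_suppPM_chiWeight_eq_empty (hP : P ⊆ BnRoots n)
    (hm : suppPM (chiWeight m) = ∅) : syzCon P m 0 := by
  obtain ⟨m', hmm', hm'⟩ := exists_isCardMinimal m
  rw [syzCon_le_ker_chiWeight hP hmm'] at hm
  have support_eq : m'.support = ∅ := by
    refine Finset.eq_empty_of_forall_notMem fun J hJ => ?_
    obtain ⟨a, ha⟩ := J.2.2.1
    simpa [hm] using (hm'.coherent hP).mem_suppPM_chiWeight hJ ha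
  rwa [support_eq_empty.1 support_eq] at hmm'

theorem syzCon_of_chiWeight_eq (hP : P ⊆ BnRoots n) (h : chiWeight m = chiWeight m') :
    syzCon P m m' := by
  induction hs : cardWeight m using Nat.strong_induction_on generalizing m m' with
  | _ s ih =>
  rcases (suppPM (chiWeight m)).eq_empty_or_nonempty with hempty | ⟨a, ha⟩
  · exact (syzCon P).trans (syzCon_zero_of_suppPM_chiWeight_eq_empty hP hempty)
      ((syzCon P).symm (syzCon_zero_of_suppPM_chiWeight_eq_empty hP (h ▸ hempty)))
  obtain ⟨C, r, hC, hmr, hcard⟩ := exists_syzCon_single_componentIn_add hP ha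
  obtain ⟨C', r', hC', hmr', -⟩ := exists_syzCon_single_componentIn_add hP (h ▸ ha)
  obtain rfl : C = C' := Subtype.ext (by rw [hC, hC', h])
  have cardWeight_lt : cardWeight r < s := by
    have : 0 < C.val.card := C.2.2.1.card_pos
    rw [map_add, cardWeight_single] at hcard
    lia
  have chiWeight_eq : chiWeight r = chiWeight r' := by
    have := (syzCon_le_ker_chiWeight hP hmr).symm.trans
      (h.trans (syzCon_le_ker_chiWeight hP hmr'))
    simpa only [map_add, add_right_inj] using this
  have hrr' := ih _ cardWeight_lt chiWeight_eq rfl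
  exact (syzCon P).trans hmr
    ((syzCon P).trans ((syzCon P).add ((syzCon P).refl _) hrr') ((syzCon P).symm hmr'))

theorem addConGen_syzRel (hP : P ⊆ BnRoots n) :
    addConGen SyzRel = AddCon.ker (weight (R := ℕ) fun J : ConnIdx n P => chiZ J.val) :=
  ker_weight_chiZ ▸
    le_antisymm (syzCon_le_ker_chiWeight hP) fun _ _ => syzCon_of_chiWeight_eq hP

end MinimalRepresentatives

open MvPolynomial in
theorem monomial_componentExponent {n : ℕ} (P : Set (Fin n → ℝ)) (D : Finset (SIdx n)) (R : Type*)
    [CommSemiring R] :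
    (monomial (componentExponent P D) 1 : MvPolynomial (ConnIdx n P) R) =
      ∏ A ∈ componentIdeals P D, X A :=
  monomial_sum_one _ _

open MvPolynomial in
theorem statement_1_general {n : ℕ} {P : Set (Fin n → ℝ)} (hP : P ⊆ BnRoots n) (R : Type*)
    [CommRing R] :
    RingHom.ker (aeval (R := R) fun J : ConnIdx n P =>
        AddMonoidAlgebra.single (chiZ J.val) (1 : R)) =
      Ideal.span {f | ∃ J K : ConnIdx n P, NontrivInter J.val K.val ∧
        f = X J * X K - (∏ A ∈ componentIdeals P (J.val ∩ K.val), X A) *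
          ∏ B ∈ componentIdeals P (suppPM (chiF J.val + chiF K.val)), X B} := by
  have binomial_eq (J K : ConnIdx n P) :
      (monomial (Finsupp.single J 1 + Finsupp.single K 1) 1 - monomial (syzExponent J K) 1 :
          MvPolynomial (ConnIdx n P) R) =
        X J * X K - (∏ A ∈ componentIdeals P (J.val ∩ K.val), X A) *
          ∏ B ∈ componentIdeals P (suppPM (chiF J.val + chiF K.val)), X B := by
    rw [← monomial_componentExponent, ← monomial_componentExponent, X, X, monomial_mul,
      monomial_mul, one_mul, syzExponent]
  rw [ker_aeval_single_eq_span (addConGen_syzRel hP)]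
  congr 1
  ext f
  constructor
  · rintro ⟨_, _, ⟨J, K, hJK, rfl, rfl⟩, rfl⟩
    exact ⟨J, K, hJK, binomial_eq J K⟩
  · rintro ⟨J, K, hJK, rfl⟩
    exact ⟨_, _, ⟨J, K, hJK, rfl, rfl⟩, (binomial_eq J K).symm⟩

theorem statement_1 (n : ℕ) (hn : 1 ≤ n) (P : Set (Fin n → ℝ)) (hP : IsSignedPoset n P)
    (k : Type) [Field k] :
    RingHom.ker (phiWt n P k) =
      Ideal.span {f | ∃ J K : ConnIdx n P, NontrivInter J.val K.val ∧ f = syzPoly n P k J K} :=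
  statement_1_general hP.1 k
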